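/- For every δ ∈ (0, 1] there exists a constant C > 0 such that for every n ∈ ℤ³ and every choice of signs ε₁, ε₃, ε₄ ∈ {−1, +1}: ∑_{n₁ ∈ ℤ³} [ ⟨n₁⟩² ⟨n − n₁⟩² (1 + |ε₁⟨n⟩ − ε₃⟨n₁⟩ − ε₄⟨n − n₁⟩|) ]^{−1} ≤ C ⟨n⟩^{−2 + δ}. -/

import Mathlib

/-- Japanese bracket of a lattice point `n ∈ ℤ³`: `⟨n⟩ = (1 + |n|²)^{1/2}`. -/
noncomputable def jb (n : Fin 3 → ℤ) : ℝ :=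
  Real.sqrt (1 + ∑ i, ((n i : ℝ)) ^ 2)

open MeasureTheory

lemma annulus_vol (p q : ℝ) (hq : 0 ≤ q) :
    volume {z : Fin 2 → ℝ | p ≤ z 0 ^ 2 + z 1 ^ 2 ∧ z 0 ^ 2 + z 1 ^ 2 ≤ p + q}
      ≤ ENNReal.ofReal (Real.pi * q) := by
  have hmeas : MeasurableSet
      {z : Fin 2 → ℝ | p ≤ z 0 ^ 2 + z 1 ^ 2 ∧ z 0 ^ 2 + z 1 ^ 2 ≤ p + q} := by
    have h1 : MeasurableSet {z : Fin 2 → ℝ | p ≤ z 0 ^ 2 + z 1 ^ 2} :=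
      measurableSet_le (by fun_prop) (by fun_prop)
    have h2 : MeasurableSet {z : Fin 2 → ℝ | z 0 ^ 2 + z 1 ^ 2 ≤ p + q} :=
      measurableSet_le (by fun_prop) (by fun_prop)
    exact h1.inter h2
  rw [← (PiLp.volume_preserving_ofLp (Fin 2)).measure_preimage hmeas.nullMeasurableSet]
  have hsub : (WithLp.ofLp : EuclideanSpace ℝ (Fin 2) → (Fin 2 → ℝ)) ⁻¹'
      {z : Fin 2 → ℝ | p ≤ z 0 ^ 2 + z 1 ^ 2 ∧ z 0 ^ 2 + z 1 ^ 2 ≤ p + q} ⊆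
      Metric.closedBall 0 (Real.sqrt (p + q)) \ Metric.ball 0 (Real.sqrt p) := by
    intro z hz
    simp only [Set.mem_preimage, Set.mem_ofPred_eq] at hz
    simp only [Set.mem_sdiff, mem_closedBall_zero_iff, mem_ball_zero_iff, not_lt,
      EuclideanSpace.norm_eq, Fin.sum_univ_two, Real.norm_eq_abs, sq_abs]
    exact ⟨Real.sqrt_le_sqrt hz.2, Real.sqrt_le_sqrt hz.1⟩
  refine (measure_mono hsub).trans ?_
  rw [measure_sdiff (Metric.ball_subset_closedBall.trans (Metric.closedBall_subset_closedBall
    (Real.sqrt_le_sqrt (by linarith)))) Metric.isOpen_ball.measurableSet.nullMeasurableSet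
    (measure_ball_lt_top).ne]
  rw [EuclideanSpace.volume_closedBall_fin_two, EuclideanSpace.volume_ball_fin_two]
  rw [← ENNReal.ofReal_pow (Real.sqrt_nonneg _), ← ENNReal.ofReal_pow (Real.sqrt_nonneg _),
    ← ENNReal.ofReal_mul (by positivity), ← ENNReal.ofReal_mul (by positivity),
    ← ENNReal.ofReal_sub _ (by positivity)]
  apply ENNReal.ofReal_le_ofReal
  have h1 : Real.sqrt (p + q) ^ 2 ≤ Real.sqrt p ^ 2 + q := by
    rcases le_total 0 p with h | h
    · rw [Real.sq_sqrt h, Real.sq_sqrt (by linarith)]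
    · rw [Real.sqrt_eq_zero_of_nonpos h]
      rcases le_total 0 (p+q) with h' | h'
      · rw [Real.sq_sqrt h']; linarith
      · rw [Real.sqrt_eq_zero_of_nonpos h']; linarith
  nlinarith [Real.pi_pos]

lemma slab_vol (c l p q : ℝ) (hq : 0 ≤ q) :
    volume {y : Fin 3 → ℝ | (c ≤ y 0 ∧ y 0 ≤ c + l) ∧ p ≤ y 0 ^ 2 + y 1 ^ 2 + y 2 ^ 2 ∧
        y 0 ^ 2 + y 1 ^ 2 + y 2 ^ 2 ≤ p + q}
      ≤ ENNReal.ofReal (Real.pi * q) * ENNReal.ofReal l := by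
  set S : Set (ℝ × (Fin 2 → ℝ)) := {w | (c ≤ w.1 ∧ w.1 ≤ c + l) ∧
      p ≤ w.1 ^ 2 + w.2 0 ^ 2 + w.2 1 ^ 2 ∧ w.1 ^ 2 + w.2 0 ^ 2 + w.2 1 ^ 2 ≤ p + q} with hS
  have hSm : MeasurableSet S := by
    have h1 : MeasurableSet {w : ℝ × (Fin 2 → ℝ) | c ≤ w.1} :=
      measurableSet_le (by fun_prop) (by fun_prop)
    have h2 : MeasurableSet {w : ℝ × (Fin 2 → ℝ) | w.1 ≤ c + l} :=
      measurableSet_le (by fun_prop) (by fun_prop)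
    have h3 : MeasurableSet {w : ℝ × (Fin 2 → ℝ) | p ≤ w.1 ^ 2 + w.2 0 ^ 2 + w.2 1 ^ 2} :=
      measurableSet_le (by fun_prop) (by fun_prop)
    have h4 : MeasurableSet {w : ℝ × (Fin 2 → ℝ) | w.1 ^ 2 + w.2 0 ^ 2 + w.2 1 ^ 2 ≤ p + q} :=
      measurableSet_le (by fun_prop) (by fun_prop)
    exact (h1.inter h2).inter (h3.inter h4)
  have h1 := (volume_preserving_piFinSuccAbove (fun _ : Fin 3 => ℝ) 0).measure_preimage
    hSm.nullMeasurableSet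
  have h2 : (MeasurableEquiv.piFinSuccAbove (fun _ : Fin 3 => ℝ) 0) ⁻¹' S =
      {y : Fin 3 → ℝ | (c ≤ y 0 ∧ y 0 ≤ c + l) ∧ p ≤ y 0 ^ 2 + y 1 ^ 2 + y 2 ^ 2 ∧
        y 0 ^ 2 + y 1 ^ 2 + y 2 ^ 2 ≤ p + q} := by
    ext y
    simp [hS, MeasurableEquiv.piFinSuccAbove, Fin.insertNthEquiv]
    intro _ _
    rfl
  rw [← h2, h1, Measure.volume_eq_prod, Measure.prod_apply hSm]
  calc ∫⁻ x, volume (Prod.mk x ⁻¹' S) 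
      ≤ ∫⁻ x, (Set.Icc c (c+l)).indicator (fun _ => ENNReal.ofReal (Real.pi * q)) x := by
        apply lintegral_mono
        intro x
        by_cases hx : x ∈ Set.Icc c (c+l)
        · rw [Set.indicator_of_mem hx]
          refine le_trans (measure_mono ?_) (annulus_vol (p - x^2) q hq)
          intro z hz
          simp only [hS, Set.mem_preimage, Set.mem_ofPred_eq] at hz ⊢
          constructor <;> linarith [hz.2.1, hz.2.2]
        · rw [Set.indicator_of_notMem hx]
          have : Prod.mk x ⁻¹' S = ∅ := by
            ext z
            simp only [hS, Set.mem_preimage, Set.mem_ofPred_eq, Set.mem_empty_iff_false, iff_false]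
            exact fun h => hx h.1
          simp [this]
    _ = _ := by
        rw [lintegral_indicator measurableSet_Icc]
        simp

lemma lens_vol (v : EuclideanSpace ℝ (Fin 3)) (hv : v ≠ 0) (p p' q q' : ℝ) (hq : 0 ≤ q) :
    volume {x : EuclideanSpace ℝ (Fin 3) | (p ≤ ‖x‖ ^ 2 ∧ ‖x‖ ^ 2 ≤ p + q) ∧
        (p' ≤ ‖x - v‖ ^ 2 ∧ ‖x - v‖ ^ 2 ≤ p' + q')}
      ≤ ENNReal.ofReal (Real.pi * q) * ENNReal.ofReal ((q + q') / (2 * ‖v‖)) := by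
  have hv0 : 0 < ‖v‖ := norm_pos_iff.mpr hv
  obtain ⟨b, hb⟩ := Orthonormal.exists_orthonormalBasis_extension_of_card_eq (𝕜 := ℝ)
    (E := EuclideanSpace ℝ (Fin 3)) (ι := Fin 3) (by simp) (v := fun _ => (‖v‖)⁻¹ • v)
    (s := {0}) (by
      rw [orthonormal_iff_ite]
      rintro ⟨i, hi⟩ ⟨j, hj⟩
      simp only [Set.mem_singleton_iff] at hi hj
      subst hi; subst hj
      simp [norm_smul, hv0.ne'])
  have hb0 : b 0 = (‖v‖)⁻¹ • v := hb 0 rfl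
  set c := (p + ‖v‖ ^ 2 - (p' + q')) / (2 * ‖v‖) with hc
  refine le_trans ?_ (slab_vol c ((q + q') / (2 * ‖v‖)) p q hq)
  set T : Set (Fin 3 → ℝ) := {y : Fin 3 → ℝ | (c ≤ y 0 ∧ y 0 ≤ c + (q + q') / (2 * ‖v‖)) ∧
        p ≤ y 0 ^ 2 + y 1 ^ 2 + y 2 ^ 2 ∧
        y 0 ^ 2 + y 1 ^ 2 + y 2 ^ 2 ≤ p + q} with hT
  have hmp := (PiLp.volume_preserving_ofLp (Fin 3)).comp b.measurePreserving_repr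
  refine le_trans (measure_mono ?_) (hmp.measure_preimage_le T)
  intro x hx
  simp only [Set.mem_ofPred_eq] at hx
  obtain ⟨⟨h1, h2⟩, h3, h4⟩ := hx
  have hn : ‖x‖ ^ 2 = (b.repr x) 0 ^ 2 + (b.repr x) 1 ^ 2 + (b.repr x) 2 ^ 2 := by
    rw [← b.repr.norm_map x, EuclideanSpace.norm_sq_eq]
    simp [Fin.sum_univ_three]
  have h0 : (b.repr x) 0 = inner ℝ x v / ‖v‖ := by
    rw [b.repr_apply_apply, hb0, inner_smul_left, real_inner_comm]
    simp; field_simp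
  have hin : ‖x - v‖ ^ 2 = ‖x‖ ^ 2 - 2 * inner ℝ x v + ‖v‖ ^ 2 := norm_sub_sq_real x v
  simp only [hT, Set.mem_preimage, Function.comp, Set.mem_ofPred_eq]
  refine ⟨⟨?_, ?_⟩, ?_, ?_⟩
  · rw [h0, hc, div_le_div_iff₀ (by positivity) (by positivity)]
    nlinarith
  · rw [h0, hc, ← add_div, div_le_div_iff₀ (by positivity) (by positivity)]
    nlinarith
  · linarith
  · linarith

/-- lattice point as a Euclidean vector -/
noncomputable def latv (m : Fin 3 → ℤ) : EuclideanSpace ℝ (Fin 3) :=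
  WithLp.toLp 2 (fun i => (m i : ℝ))

lemma latv_sub (n m : Fin 3 → ℤ) : latv (n - m) = latv n - latv m := by
  ext i; simp [latv]

lemma jb_eq (m : Fin 3 → ℤ) : jb m = Real.sqrt (1 + ‖latv m‖ ^ 2) := by
  rw [EuclideanSpace.norm_sq_eq]; simp [jb, latv]

lemma jb_sq (m : Fin 3 → ℤ) : jb m ^ 2 = 1 + ‖latv m‖ ^ 2 := by
  rw [jb_eq, Real.sq_sqrt (by positivity)]

lemma one_le_jb (m : Fin 3 → ℤ) : 1 ≤ jb m := by
  rw [jb_eq, Real.one_le_sqrt]; nlinarith [sq_nonneg ‖latv m‖]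

lemma norm_le_jb (m : Fin 3 → ℤ) : ‖latv m‖ ≤ jb m := by
  nlinarith [jb_sq m, one_le_jb m, norm_nonneg (latv m)]

lemma jb_le_norm (m : Fin 3 → ℤ) : jb m ≤ ‖latv m‖ + 1 := by
  nlinarith [jb_sq m, one_le_jb m, norm_nonneg (latv m)]

lemma jb_tri (n m : Fin 3 → ℤ) : jb n ≤ jb m + jb (n - m) + 1 := by
  have h := norm_add_le (latv m) (latv n - latv m)
  rw [add_sub_cancel, ← latv_sub] at h
  linarith [jb_le_norm n, norm_le_jb m, norm_le_jb (n - m)]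

lemma one_le_norm_latv (m : Fin 3 → ℤ) (hm : m ≠ 0) : 1 ≤ ‖latv m‖ := by
  obtain ⟨i, hi⟩ := Function.ne_iff.mp hm
  have h1 := PiLp.norm_apply_le (latv m) i
  have h2 : (1:ℝ) ≤ |(m i : ℝ)| := by
    exact_mod_cast Int.one_le_abs hi
  simp only [latv, Real.norm_eq_abs] at h1 ⊢
  linarith

lemma lattice_count (F : Set (Fin 3 → ℤ)) (E : Set (EuclideanSpace ℝ (Fin 3)))
    (h : ∀ m ∈ F, ∀ x : EuclideanSpace ℝ (Fin 3),
      (∀ i, (m i : ℝ) ≤ x i ∧ x i < m i + 1) → x ∈ E) :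
    (F.encard : ENNReal) ≤ volume E := by
  let Q : (Fin 3 → ℤ) → Set (EuclideanSpace ℝ (Fin 3)) := fun m =>
    WithLp.ofLp ⁻¹' (Set.univ.pi fun i => Set.Ico (m i : ℝ) (m i + 1))
  have hmeas : ∀ m : Fin 3 → ℤ,
      MeasurableSet (Set.univ.pi fun i => Set.Ico (m i : ℝ) (m i + 1)) := fun m =>
    MeasurableSet.univ_pi fun i => measurableSet_Ico
  have hmem : ∀ m x, x ∈ Q m ↔ ∀ i, (m i : ℝ) ≤ x i ∧ x i < m i + 1 := by
    intro m x; simp [Q]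
  have hQ : ∀ m, volume (Q m) = 1 := by
    intro m
    rw [(PiLp.volume_preserving_ofLp (Fin 3)).measure_preimage (hmeas m).nullMeasurableSet,
      volume_pi_pi]
    simp
  have hQm : ∀ m, MeasurableSet (Q m) := fun m =>
    (PiLp.volume_preserving_ofLp (Fin 3)).measurable (hmeas m)
  have hdis : Pairwise (Function.onFun Disjoint (fun m : F => Q m)) := by
    intro m m' hne
    refine Set.disjoint_left.mpr fun x hx hx' => hne ?_
    rw [hmem] at hx hx'
    apply Subtype.ext
    funext i
    have e1 := Int.floor_eq_iff.mpr (hx i)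
    have e2 := Int.floor_eq_iff.mpr (hx' i)
    exact e1.symm.trans e2
  calc (F.encard : ENNReal) = ∑' m : F, volume (Q m) := by
        simp [hQ, ENNReal.tsum_set_one]
    _ ≤ volume (⋃ m : F, Q m) :=
        (tsum_meas_le_meas_iUnion_of_disjoint₀ _ (fun m => (hQm m).nullMeasurableSet)
          (fun i j hij => (hdis hij).aedisjoint))
    _ ≤ volume E := by
        apply measure_mono
        apply Set.iUnion_subset
        rintro ⟨m, hm⟩ x hx
        exact h m hm x ((hmem m x).mp hx)

lemma count_le (n : Fin 3 → ℤ) (a b : ℕ) (ha : 1 ≤ a) (hab : a ≤ b) :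
    (({m : Fin 3 → ℤ | ⌊jb m⌋₊ = a ∧ ⌊jb (n - m)⌋₊ = b}).encard : ENNReal)
      ≤ ENNReal.ofReal (1113 * Real.pi * (a * b) / jb n) := by
  have haR : (1:ℝ) ≤ a := by exact_mod_cast ha
  have habR : (a:ℝ) ≤ b := by exact_mod_cast hab
  obtain ⟨v, hv1, hv2, hv3⟩ : ∃ v : EuclideanSpace ℝ (Fin 3), 1 ≤ ‖v‖ ∧ ‖latv n - v‖ ≤ 1 ∧
      jb n ≤ 2 * ‖v‖ := by
    by_cases hn : n = 0
    · refine ⟨EuclideanSpace.single 0 1, by simp, ?_, ?_⟩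
      · have : latv n = 0 := by ext i; simp [latv, hn]
        rw [this]; simp
      · simp [hn, jb]
    · have h1 := one_le_norm_latv n hn
      exact ⟨latv n, h1, by simp, by linarith [jb_le_norm n]⟩
  have hv : v ≠ 0 := by
    rintro rfl; simp at hv1; linarith
  refine le_trans (lattice_count _ _ ?_) (le_trans (lens_vol v hv (a ^ 2 - 6 * a) (b ^ 2 - 8 * b)
    (21 * a) (32 * b) (by positivity)) ?_)
  · rintro m ⟨hm1, hm2⟩ x hx
    have hxm : ‖x - latv m‖ ≤ 2 := by
      have : ‖x - latv m‖ ^ 2 ≤ 3 := by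
        rw [EuclideanSpace.norm_sq_eq, Fin.sum_univ_three]
        simp only [latv, PiLp.sub_apply, Real.norm_eq_abs, sq_abs]
        nlinarith [hx 0, hx 1, hx 2]
      nlinarith [norm_nonneg (x - latv m)]
    have hj1 := Nat.floor_le (zero_le_one.trans (one_le_jb m))
    have hj2 := Nat.lt_floor_add_one (jb m)
    have hk1 := Nat.floor_le (zero_le_one.trans (one_le_jb (n - m)))
    have hk2 := Nat.lt_floor_add_one (jb (n - m))
    rw [hm1] at hj1 hj2
    rw [hm2] at hk1 hk2
    have t1 : ‖x‖ ≤ a + 3 := by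
      have := norm_add_le (x - latv m) (latv m)
      rw [sub_add_cancel] at this
      linarith [norm_le_jb m]
    have t2 : a - 3 ≤ ‖x‖ := by
      have := norm_sub_le x (x - latv m)
      rw [sub_sub_cancel] at this
      linarith [jb_le_norm m]
    have t3 : ‖x - v‖ ≤ b + 4 := by
      have e : x - v = (x - latv m) - latv (n - m) + (latv n - v) := by rw [latv_sub]; abel
      have := norm_add_le ((x - latv m) - latv (n - m)) (latv n - v)
      have h' := norm_sub_le (x - latv m) (latv (n - m))
      rw [← e] at this
      linarith [norm_le_jb (n - m)]
    have t4 : b - 4 ≤ ‖x - v‖ := by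
      have e : latv (n - m) = (x - latv m) + (latv n - v) - (x - v) := by rw [latv_sub]; abel
      have := norm_sub_le ((x - latv m) + (latv n - v)) (x - v)
      have h' := norm_add_le (x - latv m) (latv n - v)
      rw [← e] at this
      linarith [jb_le_norm (n - m)]
    have p1 := norm_nonneg x
    have p2 := norm_nonneg (x - v)
    refine ⟨⟨?_, ?_⟩, ?_, ?_⟩
    · rcases le_total 3 (a:ℝ) with h | h <;> nlinarith
    · nlinarith
    · rcases le_total 4 (b:ℝ) with h | h <;> nlinarith
    · nlinarith
  · rw [← ENNReal.ofReal_mul (by positivity)]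
    apply ENNReal.ofReal_le_ofReal
    have hN : 0 < jb n := zero_lt_one.trans_le (one_le_jb n)
    calc Real.pi * (21 * a) * ((21 * a + 32 * b) / (2 * ‖v‖))
        ≤ Real.pi * (21 * a) * ((53 * b) / (jb n)) := by
          gcongr
          linarith
      _ = _ := by ring

lemma count_le' (n : Fin 3 → ℤ) (a b : ℕ) (ha : 1 ≤ a) (hb : 1 ≤ b) :
    (({m : Fin 3 → ℤ | ⌊jb m⌋₊ = a ∧ ⌊jb (n - m)⌋₊ = b}).encard : ENNReal)
      ≤ ENNReal.ofReal (1113 * Real.pi * (a * b) / jb n) := by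
  rcases le_total a b with h | h
  · exact count_le n a b ha h
  · have := count_le n b a hb h
    rw [mul_comm (b:ℝ)] at this
    refine le_trans (le_of_eq ?_) this
    congr 1
    have e : {m : Fin 3 → ℤ | ⌊jb m⌋₊ = a ∧ ⌊jb (n - m)⌋₊ = b} =
        (fun m => n - m) '' {m : Fin 3 → ℤ | ⌊jb m⌋₊ = b ∧ ⌊jb (n - m)⌋₊ = a} := by
      ext m
      simp only [Set.mem_image, Set.mem_ofPred_eq]
      constructor
      · rintro ⟨h1, h2⟩
        exact ⟨n - m, ⟨h2, by simpa using h1⟩, by simp⟩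
      · rintro ⟨k, ⟨h1, h2⟩, rfl⟩
        exact ⟨h2, by simpa using h1⟩
    rw [e, Function.Injective.encard_image (fun x y hxy => by simpa using hxy)]

lemma rpow_neg_anti {x y : ℝ} (hx : 0 < x) (hxy : x ≤ y) {s : ℝ} (hs : 0 ≤ s) :
    y ^ (-s) ≤ x ^ (-s) :=
  Real.rpow_le_rpow_of_nonpos hx hxy (by linarith)

lemma pointwise_aux (δ : ℝ) (hδ0 : 0 < δ) (hδ1 : δ ≤ 1) (a b k N : ℝ) (ha : 1 ≤ a) (hab : a ≤ b)
    (hk : 1 ≤ k) (hN : 1 ≤ N) (hNb : N ≤ 5 * b) :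
    (a * b * k)⁻¹ ≤ 5 * N ^ (-1 + δ) *
      (a ^ (-(1 + δ / 2)) * (b ^ (-(1 + δ / 2)) + k ^ (-(1 + δ / 2)))) := by
  have ha0 : 0 < a := by linarith
  have hb0 : 0 < b := by linarith
  have hk0 : 0 < k := by linarith
  have hN0 : 0 < N := by linarith
  have split : ∀ x : ℝ, 0 < x → x ^ (-(1 + δ / 2)) = x⁻¹ * x ^ (-(δ / 2)) := by
    intro x hx
    rw [← Real.rpow_neg_one, ← Real.rpow_add hx]; ring_nf
  have e1 : b⁻¹ = b ^ (-(1 - δ)) * b ^ (-(δ / 2)) * b ^ (-(δ / 2)) := by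
    rw [← Real.rpow_neg_one, ← Real.rpow_add hb0, ← Real.rpow_add hb0]; ring_nf
  have h1 : b ^ (-(1 - δ)) ≤ 5 * N ^ (-1 + δ) := by
    calc b ^ (-(1 - δ)) ≤ (N / 5) ^ (-(1 - δ)) :=
          rpow_neg_anti (by positivity) (by linarith) (by linarith)
      _ = N ^ (-1 + δ) * 5 ^ (1 - δ) := by
          rw [Real.div_rpow hN0.le (by norm_num), Real.rpow_neg (by norm_num : (0:ℝ) ≤ 5),
            div_inv_eq_mul]
          ring_nf
      _ ≤ N ^ (-1 + δ) * 5 := by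
          gcongr
          calc (5:ℝ) ^ (1 - δ) ≤ 5 ^ (1:ℝ) :=
                Real.rpow_le_rpow_of_exponent_le (by norm_num) (by linarith)
            _ = 5 := by simp
      _ = _ := by ring
  have h2 : b ^ (-(δ / 2)) ≤ a ^ (-(δ / 2)) := rpow_neg_anti ha0 hab (by linarith)
  have h3 : b ^ (-(δ / 2)) * k⁻¹ ≤ b ^ (-(1 + δ / 2)) + k ^ (-(1 + δ / 2)) := by
    rcases le_total b k with h | h
    · have : b ^ (-(δ / 2)) * k⁻¹ ≤ b ^ (-(1 + δ / 2)) := by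
        rw [split b hb0, mul_comm]
        gcongr
      linarith [Real.rpow_nonneg hk0.le (-(1 + δ / 2))]
    · have : b ^ (-(δ / 2)) * k⁻¹ ≤ k ^ (-(1 + δ / 2)) := by
        rw [split k hk0, mul_comm]
        have := rpow_neg_anti hk0 h (s := δ / 2) (by linarith)
        gcongr
      linarith [Real.rpow_nonneg hb0.le (-(1 + δ / 2))]
  calc (a * b * k)⁻¹ = a⁻¹ * b⁻¹ * k⁻¹ := by rw [mul_inv, mul_inv]
    _ = b ^ (-(1 - δ)) * ((a⁻¹ * b ^ (-(δ / 2))) * (b ^ (-(δ / 2)) * k⁻¹)) := by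
        rw [e1]; ring
    _ ≤ (5 * N ^ (-1 + δ)) * ((a⁻¹ * a ^ (-(δ / 2))) *
          (b ^ (-(1 + δ / 2)) + k ^ (-(1 + δ / 2)))) := by
        gcongr
    _ = _ := by rw [split a ha0]

lemma pointwise_le (δ : ℝ) (hδ0 : 0 < δ) (hδ1 : δ ≤ 1) (a b k N : ℝ) (ha : 1 ≤ a) (hb : 1 ≤ b)
    (hk : 1 ≤ k) (hN : 1 ≤ N) (hNb : N ≤ a + b + 3) :
    (a * b * k)⁻¹ ≤ 5 * N ^ (-1 + δ) *
      (a ^ (-(1 + δ / 2)) * (b ^ (-(1 + δ / 2)) + k ^ (-(1 + δ / 2))) +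
       b ^ (-(1 + δ / 2)) * (a ^ (-(1 + δ / 2)) + k ^ (-(1 + δ / 2)))) := by
  have ha0 : 0 < a := by linarith
  have hb0 : 0 < b := by linarith
  have hk0 : 0 < k := by linarith
  have hN0 : 0 < N := by linarith
  rw [mul_add]
  rcases le_total a b with h | h
  · have := pointwise_aux δ hδ0 hδ1 a b k N ha h hk hN (by linarith)
    have p : 0 ≤ 5 * N ^ (-1 + δ) *
      (b ^ (-(1 + δ / 2)) * (a ^ (-(1 + δ / 2)) + k ^ (-(1 + δ / 2)))) := by positivity
    linarith
  · have := pointwise_aux δ hδ0 hδ1 b a k N hb h hk hN (by linarith)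
    rw [mul_comm b a] at this
    have p : 0 ≤ 5 * N ^ (-1 + δ) *
      (a ^ (-(1 + δ / 2)) * (b ^ (-(1 + δ / 2)) + k ^ (-(1 + δ / 2)))) := by positivity
    linarith

lemma int_sum_ne_top (s : ℝ) (hs : 1 < s) :
    ∑' j : ℤ, ENNReal.ofReal ((1 + |(j : ℝ)|) ^ (-s)) ≠ ⊤ := by
  have h : Summable (fun n : ℕ => (1 + (n : ℝ)) ^ (-s)) := by
    have := (summable_nat_add_iff 1).mpr (Real.summable_nat_rpow.mpr (by linarith : -s < -1))
    refine this.congr fun n => ?_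
    push_cast; rw [add_comm]
  have h2 : Summable (fun j : ℤ => (1 + |(j : ℝ)|) ^ (-s)) := by
    apply Summable.of_nat_of_neg
    · simpa using h
    · simpa using h
  exact h2.tsum_ofReal_ne_top

lemma shift_sum_le (s : ℝ) (hs : 1 < s) (d : ℝ) :
    ∑' b : ℕ, ENNReal.ofReal ((1 + |d - b|) ^ (-s)) ≤
      ENNReal.ofReal (2 ^ s) * ∑' j : ℤ, ENNReal.ofReal ((1 + |(j : ℝ)|) ^ (-s)) := by
  have hinj : Function.Injective (fun b : ℕ => (b : ℤ) - ⌊d⌋) := by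
    intro x y h; simpa using h
  rw [← ENNReal.tsum_mul_left]
  refine le_trans (ENNReal.tsum_le_tsum fun b => ?_)
    (ENNReal.tsum_comp_le_tsum_of_injective hinj _)
  rw [← ENNReal.ofReal_mul (by positivity)]
  apply ENNReal.ofReal_le_ofReal
  have h1 := Int.floor_le d
  have h2 := Int.lt_floor_add_one d
  push_cast
  have key : (1 + |(b:ℝ) - ⌊d⌋|) / 2 ≤ 1 + |d - b| := by
    have : |(b:ℝ) - ⌊d⌋| ≤ |d - b| + 1 := by
      rw [abs_le]; constructor
      · linarith [le_abs_self (d - b)]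
      · linarith [neg_abs_le (d - b)]
    linarith [abs_nonneg (d - b)]
  calc (1 + |d - b|) ^ (-s) ≤ ((1 + |(b:ℝ) - ⌊d⌋|) / 2) ^ (-s) :=
        rpow_neg_anti (by positivity) key (by linarith)
    _ = 2 ^ s * (1 + |(b:ℝ) - ⌊d⌋|) ^ (-s) := by
        rw [Real.div_rpow (by positivity) (by norm_num), Real.rpow_neg (by norm_num : (0:ℝ) ≤ 2),
          div_inv_eq_mul, mul_comm]

lemma shift_sum_le' (s : ℝ) (hs : 1 < s) (c ε : ℝ) (hε : ε = 1 ∨ ε = -1) :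
    ∑' b : ℕ, ENNReal.ofReal ((1 + |c - ε * b|) ^ (-s)) ≤
      ENNReal.ofReal (2 ^ s) * ∑' j : ℤ, ENNReal.ofReal ((1 + |(j : ℝ)|) ^ (-s)) := by
  rcases hε with rfl | rfl
  · simpa using shift_sum_le s hs c
  · refine le_trans (le_of_eq ?_) (shift_sum_le s hs (-c))
    refine tsum_congr fun b => ?_
    rw [← abs_neg (c - -1 * b)]
    ring_nf

/-- the two-parameter majorant -/
noncomputable def maj (s N ε₁ ε₃ ε₄ : ℝ) (a b : ℕ) : ENNReal :=
  ENNReal.ofReal ((a : ℝ) ^ (-s)) * (ENNReal.ofReal ((b : ℝ) ^ (-s)) +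
      ENNReal.ofReal ((1 + |ε₁ * N - ε₃ * a - ε₄ * b|) ^ (-s))) +
  ENNReal.ofReal ((b : ℝ) ^ (-s)) * (ENNReal.ofReal ((a : ℝ) ^ (-s)) +
      ENNReal.ofReal ((1 + |ε₁ * N - ε₃ * a - ε₄ * b|) ^ (-s)))

lemma maj_sum (s : ℝ) (hs : 1 < s) : ∃ M : ENNReal, M ≠ ⊤ ∧ ∀ N ε₁ ε₃ ε₄ : ℝ,
    (ε₃ = 1 ∨ ε₃ = -1) → (ε₄ = 1 ∨ ε₄ = -1) →
    ∑' p : ℕ × ℕ, maj s N ε₁ ε₃ ε₄ p.1 p.2 ≤ M := by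
  set P := ∑' a : ℕ, ENNReal.ofReal ((a : ℝ) ^ (-s)) with hP
  set W := ENNReal.ofReal (2 ^ s) * ∑' j : ℤ, ENNReal.ofReal ((1 + |(j : ℝ)|) ^ (-s)) with hW
  have hPt : P ≠ ⊤ := (Real.summable_nat_rpow.mpr (by linarith : -s < -1)).tsum_ofReal_ne_top
  have hWt : W ≠ ⊤ := ENNReal.mul_ne_top ENNReal.ofReal_ne_top (int_sum_ne_top s hs)
  refine ⟨P * (P + W) + P * (P + W), by finiteness, fun N ε₁ ε₃ ε₄ h3 h4 => ?_⟩
  unfold maj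
  rw [ENNReal.tsum_add]
  gcongr
  · rw [ENNReal.tsum_prod']
    simp only []
    rw [hP, ← ENNReal.tsum_mul_right]
    refine ENNReal.tsum_le_tsum fun a => ?_
    rw [ENNReal.tsum_mul_left, ENNReal.tsum_add]
    gcongr
    exact shift_sum_le' s hs _ _ h4
  · rw [ENNReal.tsum_prod', ENNReal.tsum_comm]
    simp only []
    rw [hP, ← ENNReal.tsum_mul_right]
    refine ENNReal.tsum_le_tsum fun b => ?_
    rw [ENNReal.tsum_mul_left, ENNReal.tsum_add]
    gcongr
    refine le_trans (le_of_eq ?_) (shift_sum_le' s hs (ε₁ * N - ε₄ * b) _ h3)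
    refine tsum_congr fun a => ?_
    rw [sub_right_comm]

lemma fiber_le (δ : ℝ) (hδ0 : 0 < δ) (hδ1 : δ ≤ 1) (n : Fin 3 → ℤ) (ε₁ ε₃ ε₄ : ℝ)
    (h3 : ε₃ = 1 ∨ ε₃ = -1) (h4 : ε₄ = 1 ∨ ε₄ = -1) (p : ℕ × ℕ) :
    ∑' m : (fun m : Fin 3 → ℤ => (⌊jb m⌋₊, ⌊jb (n - m)⌋₊)) ⁻¹' {p},
        ENNReal.ofReal ((jb (m : Fin 3 → ℤ) ^ 2 * jb (n - m) ^ 2 *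
          (1 + |ε₁ * jb n - ε₃ * jb m - ε₄ * jb (n - m)|))⁻¹) ≤
      ENNReal.ofReal (16695 * Real.pi * jb n ^ (-2 + δ)) *
        maj (1 + δ / 2) (jb n) ε₁ ε₃ ε₄ p.1 p.2 := by
  obtain ⟨a, b⟩ := p
  set G : Set (Fin 3 → ℤ) := (fun m : Fin 3 → ℤ => (⌊jb m⌋₊, ⌊jb (n - m)⌋₊)) ⁻¹' {(a, b)} with hG
  have hGm : ∀ m, m ∈ G ↔ ⌊jb m⌋₊ = a ∧ ⌊jb (n - m)⌋₊ = b := by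
    intro m; simp [hG]
  rcases G.eq_empty_or_nonempty with h | ⟨m₀, hm₀⟩
  · have : IsEmpty G := Set.isEmpty_coe_sort.mpr h
    simp
  rw [hGm] at hm₀
  have ha : 1 ≤ a := by
    rw [← hm₀.1]; exact Nat.le_floor (by simpa using one_le_jb m₀)
  have hb : 1 ≤ b := by
    rw [← hm₀.2]; exact Nat.le_floor (by simpa using one_le_jb (n - m₀))
  have haR : (1:ℝ) ≤ a := by exact_mod_cast ha
  have hbR : (1:ℝ) ≤ b := by exact_mod_cast hb
  have hN1 := one_le_jb n
  have hN0 : 0 < jb n := by linarith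
  have hN : jb n ≤ a + b + 3 := by
    have h1 := Nat.lt_floor_add_one (jb m₀)
    have h2 := Nat.lt_floor_add_one (jb (n - m₀))
    rw [hm₀.1] at h1
    rw [hm₀.2] at h2
    linarith [jb_tri n m₀]
  set k : ℝ := 1 + |ε₁ * jb n - ε₃ * a - ε₄ * b| with hk
  have hk1 : 1 ≤ k := by rw [hk]; linarith [abs_nonneg (ε₁ * jb n - ε₃ * a - ε₄ * b)]
  have hterm : ∀ m : G, ENNReal.ofReal ((jb (m : Fin 3 → ℤ) ^ 2 * jb (n - m) ^ 2 *
          (1 + |ε₁ * jb n - ε₃ * jb m - ε₄ * jb (n - m)|))⁻¹) ≤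
      ENNReal.ofReal ((a ^ 2 * b ^ 2 * (k / 3))⁻¹) := by
    rintro ⟨m, hm⟩
    rw [hGm] at hm
    apply ENNReal.ofReal_le_ofReal
    have hj1 := Nat.floor_le (zero_le_one.trans (one_le_jb m))
    have hj2 := Nat.lt_floor_add_one (jb m)
    have hl1 := Nat.floor_le (zero_le_one.trans (one_le_jb (n - m)))
    have hl2 := Nat.lt_floor_add_one (jb (n - m))
    rw [hm.1] at hj1 hj2
    rw [hm.2] at hl1 hl2
    have hκ : k / 3 ≤ 1 + |ε₁ * jb n - ε₃ * jb m - ε₄ * jb (n - m)| := by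
      set κ := ε₁ * jb n - ε₃ * jb m - ε₄ * jb (n - m) with hκ
      have : |ε₁ * jb n - ε₃ * a - ε₄ * b| ≤ |κ| + 2 := by
        have u1 := le_abs_self κ
        have u2 := neg_abs_le κ
        rw [abs_le]
        rcases h3 with rfl | rfl <;> rcases h4 with rfl | rfl <;> constructor <;> linarith
      rw [hk]; linarith [abs_nonneg κ]
    simp only []
    gcongr
  calc _ ≤ ∑' m : G, ENNReal.ofReal ((a ^ 2 * b ^ 2 * (k / 3))⁻¹) := ENNReal.tsum_le_tsum hterm
    _ = (G.encard : ENNReal) * ENNReal.ofReal ((a ^ 2 * b ^ 2 * (k / 3))⁻¹) :=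
        ENNReal.tsum_set_const _ _
    _ ≤ ENNReal.ofReal (1113 * Real.pi * (a * b) / jb n) *
          ENNReal.ofReal ((a ^ 2 * b ^ 2 * (k / 3))⁻¹) := by
        gcongr
        have : G = {m : Fin 3 → ℤ | ⌊jb m⌋₊ = a ∧ ⌊jb (n - m)⌋₊ = b} := by
          ext m; exact hGm m
        rw [this]
        exact count_le' n a b ha hb
    _ = ENNReal.ofReal (3339 * Real.pi / jb n * (a * b * k)⁻¹) := by
        rw [← ENNReal.ofReal_mul (by positivity)]
        congr 1
        have : 0 < k := by linarith
        field_simp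
        ring
    _ ≤ ENNReal.ofReal (3339 * Real.pi / jb n * (5 * jb n ^ (-1 + δ) *
      ((a:ℝ) ^ (-(1 + δ / 2)) * ((b:ℝ) ^ (-(1 + δ / 2)) + k ^ (-(1 + δ / 2))) +
       (b:ℝ) ^ (-(1 + δ / 2)) * ((a:ℝ) ^ (-(1 + δ / 2)) + k ^ (-(1 + δ / 2)))))) := by
        apply ENNReal.ofReal_le_ofReal
        have := pointwise_le δ hδ0 hδ1 a b k (jb n) haR hbR hk1 hN1 hN
        gcongr
    _ = _ := by
        have e : jb n ^ (-2 + δ) = jb n ^ (-1 + δ) / jb n := by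
          rw [← Real.rpow_sub_one hN0.ne']; ring_nf
        have k0 : 0 < k := by linarith
        unfold maj
        rw [← hk, ← ENNReal.ofReal_add (by positivity) (by positivity),
          ← ENNReal.ofReal_add (by positivity) (by positivity),
          ← ENNReal.ofReal_mul (by positivity), ← ENNReal.ofReal_mul (by positivity),
          ← ENNReal.ofReal_add (by positivity) (by positivity),
          ← ENNReal.ofReal_mul (by positivity), e]
        congr 1
        ring

theorem weighted_resonance_sum_bound
    (δ : ℝ) (hδ0 : 0 < δ) (hδ1 : δ ≤ 1) :
    ∃ C : ℝ, 0 < C ∧ ∀ (n : Fin 3 → ℤ) (ε₁ ε₃ ε₄ : ℝ),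
      (ε₁ = 1 ∨ ε₁ = -1) → (ε₃ = 1 ∨ ε₃ = -1) → (ε₄ = 1 ∨ ε₄ = -1) →
      ∑' n₁ : Fin 3 → ℤ,
          ENNReal.ofReal
            ((jb n₁ ^ 2 * jb (n - n₁) ^ 2 *
                (1 + |ε₁ * jb n - ε₃ * jb n₁ - ε₄ * jb (n - n₁)|))⁻¹)
        ≤ ENNReal.ofReal (C * jb n ^ (-2 + δ)) := by
  obtain ⟨M, hM, hMs⟩ := maj_sum (1 + δ / 2) (by linarith)
  refine ⟨16695 * Real.pi * (M.toReal + 1), by positivity, ?_⟩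
  intro n ε₁ ε₃ ε₄ _ h3 h4
  have hN0 : 0 < jb n := zero_lt_one.trans_le (one_le_jb n)
  rw [← ENNReal.tsum_fiberwise _ (fun m : Fin 3 → ℤ => (⌊jb m⌋₊, ⌊jb (n - m)⌋₊))]
  calc _ ≤ ∑' p : ℕ × ℕ, ENNReal.ofReal (16695 * Real.pi * jb n ^ (-2 + δ)) *
        maj (1 + δ / 2) (jb n) ε₁ ε₃ ε₄ p.1 p.2 :=
        ENNReal.tsum_le_tsum (fiber_le δ hδ0 hδ1 n ε₁ ε₃ ε₄ h3 h4)
    _ ≤ ENNReal.ofReal (16695 * Real.pi * jb n ^ (-2 + δ)) * M := by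
        rw [ENNReal.tsum_mul_left]
        gcongr
        exact hMs _ _ _ _ h3 h4
    _ ≤ ENNReal.ofReal (16695 * Real.pi * jb n ^ (-2 + δ)) * ENNReal.ofReal (M.toReal + 1) := by
        gcongr
        exact ENNReal.le_ofReal_iff_toReal_le hM (by positivity) |>.mpr (by linarith)
    _ = _ := by
        rw [← ENNReal.ofReal_mul (by positivity)]
        congr 1
        ring
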